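/- For every λ-term M, L_r(T_r(M)) = T_r(L(M)), where L_r(T_r(M)) = { L_r(a) | a ∈ T_r(M) and L_r(a) ≠ 0 }; that is, the left-parallel reduction commutes with rigid expansion. -/

import Mathlib

/-! Ordinary λ-terms, in de Bruijn notation. -/
inductive Lam : Type
  | var : ℕ → Lam
  | lam : Lam → Lam
  | app : Lam → Lam → Lam
  deriving DecidableEq

namespace Lam

/-- Shift the free indices `≥ d` up by one. -/
def lift (d : ℕ) : Lam → Lam
  | var n => if n < d then var n else var (n + 1)
  | lam M => lam (lift (d + 1) M)
  | app P Q => app (lift d P) (lift d Q)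

/-- Capture-avoiding substitution of `N` for the free variable `k`. -/
def subst : Lam → ℕ → Lam → Lam
  | var n, k, N => if n = k then N else if k < n then var (n - 1) else var n
  | lam M, k, N => lam (subst M (k + 1) (lift 0 N))
  | app P Q, k, N => app (subst P k N) (subst Q k N)

/-- Number of free occurrences of the variable `k`. -/
def count (k : ℕ) : Lam → ℕ
  | var n => if n = k then 1 else 0
  | lam M => count (k + 1) M
  | app P Q => count k P + count k Q

/-- One-step β-reduction. -/
inductive Beta : Lam → Lam → Prop
  | beta (M N : Lam) : Beta (app (lam M) N) (subst M 0 N)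
  | lam {M M'} : Beta M M' → Beta (lam M) (lam M')
  | appL {P P' Q} : Beta P P' → Beta (app P Q) (app P' Q)
  | appR {P Q Q'} : Beta Q Q' → Beta (app P Q) (app P Q')

/-- The head of the application spine is a variable, with no λ on the spine. -/
def neutral : Lam → Bool
  | var _ => true
  | lam _ => false
  | app P _ => neutral P

/-- Head-normal forms: `λx₁…λxₘ. x N₁ … Nₙ`. -/
def isHNF : Lam → Prop
  | var _ => True
  | lam M => isHNF M
  | app P _ => neutral P = true

/-- The head-reduction function `H`: contracts the head redex, identity on head-normal
forms. -/
def H : Lam → Lam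
  | var n => var n
  | lam M => lam (H M)
  | app (lam P) Q => subst P 0 Q
  | app (var n) Q => app (var n) Q
  | app (app P₁ P₂) Q => app (H (app P₁ P₂)) Q

/-- The left-parallel reduction function `L`: identity on β-normal forms, propagated to
the arguments on head-normal forms, contraction of the head redex otherwise. -/
def L : Lam → Lam
  | var n => var n
  | lam M => lam (L M)
  | app (lam P) Q => subst P 0 Q
  | app (var n) Q => app (var n) (L Q)
  | app (app P₁ P₂) Q =>
      if neutral (app P₁ P₂) then app (L (app P₁ P₂)) (L Q)
      else app (L (app P₁ P₂)) Q

/-- Iterated application `M N₁ … Nₙ`. -/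
def mkApps (M : Lam) (Ns : List Lam) : Lam := Ns.foldl app M

/-- All free variables are `< d`. -/
def ClosedAt (d : ℕ) : Lam → Prop
  | var n => n < d
  | lam M => ClosedAt (d + 1) M
  | app P Q => ClosedAt d P ∧ ClosedAt d Q

/-- `M` is head-normalizable: it β-reduces in finitely many steps to a head-normal form. -/
def HeadNormalizable (M : Lam) : Prop :=
  ∃ N, Relation.ReflTransGen Beta M N ∧ isHNF N

/-- `M` is a β-normal form: it contains no β-redex, i.e. admits no β-step. -/
def BetaNF (M : Lam) : Prop := ¬∃ N, Beta M N

/-- `M` is β-normalizable: it β-reduces in finitely many steps to a β-normal form. -/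
def BetaNormalizable (M : Lam) : Prop :=
  ∃ N, Relation.ReflTransGen Beta M N ∧ BetaNF N

/-- `M` is strongly β-normalizable: no infinite β-reduction sequence starts from `M`. -/
def StronglyNormalizable (M : Lam) : Prop := Acc (fun N M' => Beta M' N) M

end Lam

/-! Rigid resource terms (the nonzero ones), in de Bruijn notation:
`a ::= x | λx.a | ⟨c⟩d⃗` with `d⃗` a list of rigid terms.
The term `0` is represented by `none : Option Rig`. -/
inductive Rig : Type
  | var : ℕ → Rig
  | lam : Rig → Rig
  | app : Rig → List Rig → Rig

namespace Rig

mutual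
/-- Number of free occurrences of the variable `k` in a rigid term. -/
def countR (k : ℕ) : Rig → ℕ
  | var n => if n = k then 1 else 0
  | lam a => countR (k + 1) a
  | app c ds => countR k c + countRList k ds
termination_by a => sizeOf a

def countRList (k : ℕ) : List Rig → ℕ
  | [] => 0
  | d :: ds => countR k d + countRList k ds
termination_by ds => sizeOf ds
end

mutual
/-- Shift the free indices `≥ d` up by one. -/
def liftR (d : ℕ) : Rig → Rig
  | var n => if n < d then var n else var (n + 1)
  | lam a => lam (liftR (d + 1) a)
  | app c ds => app (liftR d c) (liftRList d ds)
termination_by a => sizeOf a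

def liftRList (d : ℕ) : List Rig → List Rig
  | [] => []
  | a :: as => liftR d a :: liftRList d as
termination_by as => sizeOf as
end

mutual
/-- Rigid substitution `a[b⃗/k]`: the list `b⃗` is distributed, in order, over the
free occurrences of the variable `k`; the result is `none` (i.e. `0`) when
`|b⃗| ≠ n_k(a)`. -/
def rsubst (k : ℕ) : Rig → List Rig → Option Rig
  | var n, bs =>
      if n = k then (match bs with | [b] => some b | _ => none)
      else (match bs with
            | [] => some (if k < n then var (n - 1) else var n)
            | _ => none)
  | lam a, bs => (rsubst (k + 1) a (liftRList 0 bs)).map lam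
  | app c ds, bs =>
      match rsubst k c (bs.take (countR k c)), rsubstList k ds (bs.drop (countR k c)) with
      | some c', some ds' => some (app c' ds')
      | _, _ => none
termination_by a _ => sizeOf a

def rsubstList (k : ℕ) : List Rig → List Rig → Option (List Rig)
  | [], bs => if bs.isEmpty then some [] else none
  | d :: ds, bs =>
      match rsubst k d (bs.take (countR k d)), rsubstList k ds (bs.drop (countR k d)) with
      | some d', some ds' => some (d' :: ds')
      | _, _ => none
termination_by ds _ => sizeOf ds
end

/-- One-step rigid resource reduction `→_r` (contextual closure of
`⟨λx.a⟩b⃗ →_r a[b⃗/x]`); the result may be `0` (i.e. `none`), which annihilates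
the surrounding context. -/
inductive RStep : Rig → Option Rig → Prop
  | beta (a : Rig) (bs : List Rig) : RStep (app (lam a) bs) (rsubst 0 a bs)
  | lam {a r} : RStep a r → RStep (lam a) (r.map lam)
  | head {c r} (ds : List Rig) : RStep c r → RStep (app c ds) (r.map (fun c' => app c' ds))
  | arg {d r} (c : Rig) (ds₁ ds₂ : List Rig) :
      RStep d r → RStep (app c (ds₁ ++ d :: ds₂)) (r.map (fun d' => app c (ds₁ ++ d' :: ds₂)))

/-- `→_r` on rigid terms extended with `0`; `0` is inert. -/
inductive RStepO : Option Rig → Option Rig → Prop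
  | mk {a r} : RStep a r → RStepO (some a) r

/-- `r` is a `→_r`-normal form (`0` is one). -/
def RNormal (r : Option Rig) : Prop := ¬∃ r', RStepO r r'

/-- The head of the application spine is a variable, with no λ on the spine. -/
def rNeutral : Rig → Bool
  | var _ => true
  | lam _ => false
  | app c _ => rNeutral c

/-- Rigid head-normal forms among nonzero terms: `λx₁…λxₘ.⟨…⟨x⟩d⃗₁…⟩d⃗ₙ`
(the term `0` is a head-normal form, but it is treated separately). -/
def rIsHNF : Rig → Prop
  | var _ => True
  | lam a => rIsHNF a
  | app c _ => rNeutral c = true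

/-- The rigid head-reduction function `H_r`: contracts the head redex, identity on
head-normal forms; the result may be `0` (i.e. `none`). -/
def Hr : Rig → Option Rig
  | var n => some (var n)
  | lam a => (Hr a).map lam
  | app (lam a) bs => rsubst 0 a bs
  | app (var n) ds => some (app (var n) ds)
  | app (app c₁ c₂) ds => (Hr (app c₁ c₂)).map (fun c' => app c' ds)

/-- `H_r` extended to terms-or-`0`. -/
def HrO : Option Rig → Option Rig := fun r => r.bind Hr

mutual
/-- The rigid left-parallel reduction function `L_r`: identity on `→_r`-normal forms,
applied componentwise to the argument lists on head-normal forms, contraction of the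
head redex otherwise; the result may be `0` (i.e. `none`). -/
def Lr : Rig → Option Rig
  | var n => some (var n)
  | lam a => (Lr a).map lam
  | app (lam a) bs => rsubst 0 a bs
  | app (var n) ds => (LrList ds).map (fun ds' => app (var n) ds')
  | app (app c₁ c₂) ds =>
      if rNeutral (app c₁ c₂) then
        match Lr (app c₁ c₂), LrList ds with
        | some c', some ds' => some (app c' ds')
        | _, _ => none
      else (Lr (app c₁ c₂)).map (fun c' => app c' ds)
termination_by a => sizeOf a

def LrList : List Rig → Option (List Rig)
  | [] => some []
  | d :: ds =>
      match Lr d, LrList ds with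
      | some d', some ds' => some (d' :: ds')
      | _, _ => none
termination_by ds => sizeOf ds
end

/-- `L_r` extended to terms-or-`0`. -/
def LrO : Option Rig → Option Rig := fun r => r.bind Lr

/-- Positive resource terms: no empty list/multiset occurs as the argument of an
application. -/
inductive rPositive : Rig → Prop
  | var (n : ℕ) : rPositive (var n)
  | lam {a} : rPositive a → rPositive (lam a)
  | app {c : Rig} {ds : List Rig} :
      rPositive c → ds ≠ [] → (∀ d ∈ ds, rPositive d) → rPositive (app c ds)

end Rig

/-- The rigid expansion `T_r(M)` of a λ-term (equivalently, the support of its Taylor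
expansion, with multisets presented by lists: `Texp M` is closed under permutation of
argument lists). -/
def Texp : Lam → Set Rig
  | Lam.var n => {Rig.var n}
  | Lam.lam M => {a | ∃ b ∈ Texp M, a = Rig.lam b}
  | Lam.app P Q => {a | ∃ c ∈ Texp P, ∃ ds : List Rig, (∀ d ∈ ds, d ∈ Texp Q) ∧ a = Rig.app c ds}

namespace Rig

/-- The support of the `n`-linear substitution `∂_k a · b̄`, where the multiset `b̄` is
presented by the list `bs`: the finite formal sum (multiset) of all nonzero results of
rigid substitutions along bijective assignments, i.e. permutations of `bs`. -/
def permSubst (k : ℕ) (a : Rig) (bs : List Rig) : Multiset Rig :=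
  ↑(bs.permutations.filterMap (fun bs' => rsubst k a bs'))

/-- One step of non-erasing ε-resource reduction `→^{¬e}_{∂ε}` out of a single resource
term, producing a finite formal sum (a multiset) of resource terms: non-erasing resource
β-steps `⟨λx.a⟩b̄ → ∂_x a · b̄` (with `x ∈ FV(a)`) and resource σ₁-steps, under any
context. -/
inductive NEStep : Rig → Multiset Rig → Prop
  | beta {a : Rig} (bs : List Rig) :
      0 < countR 0 a → NEStep (app (lam a) bs) (permSubst 0 a bs)
  | sigma (a : Rig) (ts qs : List Rig) :
      NEStep (app (app (lam a) ts) qs) {app (lam (app a (liftRList 0 qs))) ts}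
  | lam {a σ} : NEStep a σ → NEStep (lam a) (σ.map lam)
  | head {c σ} (ds : List Rig) : NEStep c σ → NEStep (app c ds) (σ.map (fun c' => app c' ds))
  | arg {d σ} (c : Rig) (ds₁ ds₂ : List Rig) :
      NEStep d σ → NEStep (app c (ds₁ ++ d :: ds₂)) (σ.map (fun d' => app c (ds₁ ++ d' :: ds₂)))

/-- Non-erasing ε-resource reduction on finite formal sums, extended by linearity. -/
def NEStepSum (σ τ : Multiset Rig) : Prop :=
  ∃ (a : Rig) (ρ υ : Multiset Rig), σ = a ::ₘ ρ ∧ NEStep a υ ∧ τ = υ + ρ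

/-- `σ` is a `→^{¬e}_{∂ε}`-normal form. -/
def NENormal (σ : Multiset Rig) : Prop := ¬∃ τ, NEStepSum σ τ

end Rig

/-- One step of non-erasing ε-reduction on λ-terms: non-erasing β-steps
`(λx.M)N → M[N/x]` (with `x ∈ FV(M)`) together with σ₁-steps
`((λx.M)N)P → (λx.MP)N` (`x ∉ FV(P)`), under any context. -/
inductive NEeps : Lam → Lam → Prop
  | beta {M : Lam} (N : Lam) :
      0 < Lam.count 0 M → NEeps (Lam.app (Lam.lam M) N) (Lam.subst M 0 N)
  | sigma (M N P : Lam) :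
      NEeps (Lam.app (Lam.app (Lam.lam M) N) P)
        (Lam.app (Lam.lam (Lam.app M (Lam.lift 0 P))) N)
  | lam {M M'} : NEeps M M' → NEeps (Lam.lam M) (Lam.lam M')
  | appL {P P' Q} : NEeps P P' → NEeps (Lam.app P Q) (Lam.app P' Q)
  | appR {P Q Q'} : NEeps Q Q' → NEeps (Lam.app P Q) (Lam.app P Q')

/-- The set `S` of λ-terms. -/
inductive SLam : Lam → Prop
  | varApp (n : ℕ) (Ms : List Lam) :
      (∀ M ∈ Ms, SLam M) → SLam (Lam.mkApps (Lam.var n) Ms)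
  | lam {M} : SLam M → SLam (Lam.lam M)
  | redex (M₀ M₁ : Lam) (Ms : List Lam) :
      SLam M₁ → SLam (Lam.mkApps (Lam.subst M₀ 0 M₁) Ms) →
      SLam (Lam.mkApps (Lam.app (Lam.lam M₀) M₁) Ms)

/-- λI-terms: every abstraction binds a variable occurring free in its body. -/
def LamI : Lam → Prop
  | Lam.var _ => True
  | Lam.lam M => LamI M ∧ 0 < Lam.count 0 M
  | Lam.app P Q => LamI P ∧ LamI Q


namespace LPC
open Rig

theorem liftRList_eq (d : ℕ) (l : List Rig) : liftRList d l = l.map (liftR d) := by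
  induction l with
  | nil => simp [liftRList]
  | cons a l ih => simp [liftRList, ih]

theorem list_surj {f : Rig → Rig} {S T : Set Rig} (h : ∀ b ∈ T, ∃ a ∈ S, f a = b)
    (l : List Rig) (hl : ∀ b ∈ l, b ∈ T) : ∃ l' : List Rig, (∀ a ∈ l', a ∈ S) ∧ l'.map f = l := by
  induction l with
  | nil => exact ⟨[], by simp, rfl⟩
  | cons b l ih =>
    obtain ⟨a, ha, rfl⟩ := h b (hl b (by simp))
    obtain ⟨l', h1, rfl⟩ := ih (fun c hc => hl c (by simp [hc]))
    refine ⟨a :: l', ?_, rfl⟩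
    intro c hc
    rcases List.mem_cons.1 hc with rfl | hc
    · exact ha
    · exact h1 c hc

theorem lift_mem (N : Lam) : ∀ d, ∀ a ∈ Texp N, liftR d a ∈ Texp (Lam.lift d N) := by
  induction N with
  | var n =>
    intro d a ha
    simp only [Texp, Set.mem_singleton_iff] at ha
    subst ha
    simp only [liftR, Lam.lift]
    split <;> simp [Texp]
  | lam M ih =>
    rintro d a ⟨b, hb, rfl⟩
    simp only [liftR, Lam.lift]
    exact ⟨_, ih _ _ hb, rfl⟩
  | app P Q ihP ihQ =>
    rintro d a ⟨c, hc, ds, hds, rfl⟩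
    simp only [liftR, Lam.lift, liftRList_eq]
    refine ⟨_, ihP _ _ hc, _, ?_, rfl⟩
    intro e he
    obtain ⟨x, hx, rfl⟩ := List.mem_map.1 he
    exact ihQ _ _ (hds _ hx)

theorem lift_surj (N : Lam) : ∀ d, ∀ b ∈ Texp (Lam.lift d N), ∃ a ∈ Texp N, liftR d a = b := by
  induction N with
  | var n =>
    intro d b hb
    refine ⟨Rig.var n, by simp [Texp], ?_⟩
    simp only [Lam.lift] at hb
    simp only [liftR]
    split at hb <;> simp_all [Texp]
  | lam M ih =>
    rintro d b ⟨b, hb, rfl⟩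
    obtain ⟨a, ha, rfl⟩ := ih _ _ hb
    exact ⟨Rig.lam a, ⟨a, ha, rfl⟩, by simp [liftR]⟩
  | app P Q ihP ihQ =>
    rintro d b ⟨c, hc, ds, hds, rfl⟩
    obtain ⟨c', hc', rfl⟩ := ihP _ _ hc
    obtain ⟨l', h1, rfl⟩ := list_surj (ihQ d) ds hds
    exact ⟨Rig.app c' l', ⟨c', hc', l', h1, rfl⟩, by simp [liftR, liftRList_eq]⟩

theorem rsubstList_mem {k : ℕ} {S B T : Set Rig}
    (h : ∀ a ∈ S, ∀ bs : List Rig, (∀ b ∈ bs, b ∈ B) → ∀ r, rsubst k a bs = some r → r ∈ T)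
    (ds : List Rig) : (∀ a ∈ ds, a ∈ S) → ∀ bs : List Rig, (∀ b ∈ bs, b ∈ B) →
      ∀ rs, rsubstList k ds bs = some rs → ∀ r ∈ rs, r ∈ T := by
  induction ds with
  | nil =>
    intro _ bs _ rs hrs
    simp only [rsubstList] at hrs
    split at hrs <;> simp_all
  | cons d ds ih =>
    intro hds bs hbs rs hrs
    simp only [rsubstList] at hrs
    split at hrs
    · rename_i d' ds' h1 h2
      obtain rfl := Option.some.inj hrs
      intro r hr
      rcases List.mem_cons.1 hr with rfl | hr
      · exact h d (hds d (by simp)) _ (fun b hb => hbs b (List.mem_of_mem_take hb)) _ h1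
      · exact ih (fun a ha => hds a (by simp [ha])) _
          (fun b hb => hbs b (List.mem_of_mem_drop hb)) _ h2 r hr
    · cases hrs

theorem rsubst_mem (M : Lam) : ∀ k N, ∀ a ∈ Texp M, ∀ bs : List Rig, (∀ b ∈ bs, b ∈ Texp N) →
    ∀ r, rsubst k a bs = some r → r ∈ Texp (Lam.subst M k N) := by
  induction M with
  | var n =>
    intro k N a ha bs hbs r hr
    simp only [Texp, Set.mem_singleton_iff] at ha
    subst ha
    rw [rsubst.eq_def] at hr
    dsimp only at hr
    simp only [Lam.subst]
    split at hr
    · rename_i hn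
      rw [if_pos hn]
      split at hr
      · simp_all
      · cases hr
    · rename_i hn
      rw [if_neg hn]
      split at hr
      · obtain rfl := Option.some.inj hr
        split <;> simp [Texp]
      · cases hr
  | lam M ih =>
    rintro k N a ⟨a, ha, rfl⟩ bs hbs r hr
    simp only [rsubst, Option.map_eq_some_iff, liftRList_eq] at hr
    obtain ⟨r, hr, rfl⟩ := hr
    refine ⟨r, ih _ _ _ ha _ ?_ _ hr, rfl⟩
    intro b hb
    obtain ⟨x, hx, rfl⟩ := List.mem_map.1 hb
    exact lift_mem _ _ _ (hbs _ hx)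
  | app P Q ihP ihQ =>
    rintro k N a ⟨c, hc, ds, hds, rfl⟩ bs hbs r hr
    simp only [rsubst] at hr
    split at hr
    · rename_i c' ds' h1 h2
      obtain rfl := Option.some.inj hr
      exact ⟨c', ihP _ _ _ hc _ (fun b hb => hbs b (List.mem_of_mem_take hb)) _ h1, ds',
        rsubstList_mem (ihQ k N) ds hds _ (fun b hb => hbs b (List.mem_of_mem_drop hb)) _ h2, rfl⟩
    · cases hr

theorem rsubstList_surj {k : ℕ} {S B T : Set Rig}
    (h : ∀ r ∈ T, ∃ a ∈ S, ∃ bs : List Rig, (∀ b ∈ bs, b ∈ B) ∧ bs.length = countR k a ∧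
      rsubst k a bs = some r)
    (rs : List Rig) : (∀ r ∈ rs, r ∈ T) → ∃ ds : List Rig, (∀ a ∈ ds, a ∈ S) ∧ ∃ bs : List Rig,
      (∀ b ∈ bs, b ∈ B) ∧ bs.length = countRList k ds ∧ rsubstList k ds bs = some rs := by
  induction rs with
  | nil => exact fun _ => ⟨[], by simp, [], by simp, by simp [countRList], by simp [rsubstList]⟩
  | cons r rs ih =>
    intro hrs
    obtain ⟨a, ha, bs, hbs, hl, hr⟩ := h r (hrs r (by simp))
    obtain ⟨ds, hds, bs', hbs', hl', hr'⟩ := ih (fun x hx => hrs x (by simp [hx]))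
    refine ⟨a :: ds, ?_, bs ++ bs', ?_, by simp [countRList, hl, hl'], ?_⟩
    · intro x hx
      rcases List.mem_cons.1 hx with rfl | hx
      · exact ha
      · exact hds x hx
    · intro x hx
      rcases List.mem_append.1 hx with hx | hx
      · exact hbs x hx
      · exact hbs' x hx
    · simp only [rsubstList, ← hl, List.take_left', List.drop_left', hr, hr']

theorem rsubst_surj (M : Lam) : ∀ k N, ∀ r ∈ Texp (Lam.subst M k N), ∃ a ∈ Texp M,
    ∃ bs : List Rig, (∀ b ∈ bs, b ∈ Texp N) ∧ bs.length = countR k a ∧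
      rsubst k a bs = some r := by
  induction M with
  | var n =>
    intro k N r hr
    refine ⟨Rig.var n, by simp [Texp], ?_⟩
    simp only [Lam.subst] at hr
    by_cases hn : n = k
    · rw [if_pos hn] at hr
      exact ⟨[r], by simpa using hr, by simp [countR, hn], by simp [rsubst, hn]⟩
    · rw [if_neg hn] at hr
      refine ⟨[], by simp, by simp [countR, hn], ?_⟩
      split at hr <;> simp_all [Texp, rsubst]
  | lam M ih =>
    rintro k N r ⟨r, hr, rfl⟩
    obtain ⟨a, ha, bs, hbs, hl, hr⟩ := ih _ _ _ hr
    obtain ⟨l', h1, rfl⟩ := list_surj (lift_surj N 0) bs hbs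
    refine ⟨Rig.lam a, ⟨a, ha, rfl⟩, l', h1, by simpa [countR] using hl, ?_⟩
    simp [rsubst, liftRList_eq, hr]
  | app P Q ihP ihQ =>
    rintro k N r ⟨c, hc, ds, hds, rfl⟩
    obtain ⟨a, ha, bs, hbs, hl, hr⟩ := ihP _ _ _ hc
    obtain ⟨es, hes, bs', hbs', hl', hr'⟩ := rsubstList_surj (ihQ k N) ds hds
    refine ⟨Rig.app a es, ⟨a, ha, es, hes, rfl⟩, bs ++ bs', ?_, by simp [countR, hl, hl'], ?_⟩
    · intro x hx
      rcases List.mem_append.1 hx with hx | hx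
      · exact hbs x hx
      · exact hbs' x hx
    · simp only [rsubst, ← hl, List.take_left', List.drop_left', hr, hr']

theorem neutral_eq (M : Lam) : ∀ a ∈ Texp M, rNeutral a = Lam.neutral M := by
  induction M with
  | var n =>
    intro a ha
    simp only [Texp, Set.mem_singleton_iff] at ha
    subst ha
    rfl
  | lam M ih => rintro a ⟨b, hb, rfl⟩; rfl
  | app P Q ihP ihQ =>
    rintro a ⟨c, hc, ds, hds, rfl⟩
    simpa [rNeutral, Lam.neutral] using ihP c hc

theorem LrList_mem {S T : Set Rig} (h : ∀ a ∈ S, ∀ r, Lr a = some r → r ∈ T) (ds : List Rig) :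
    (∀ a ∈ ds, a ∈ S) → ∀ rs, LrList ds = some rs → ∀ r ∈ rs, r ∈ T := by
  induction ds with
  | nil => intro _ rs hrs; simp_all [LrList]
  | cons d ds ih =>
    intro hds rs hrs
    simp only [LrList] at hrs
    split at hrs
    · rename_i d' ds' h1 h2
      obtain rfl := Option.some.inj hrs
      intro r hr
      rcases List.mem_cons.1 hr with rfl | hr
      · exact h d (hds d (by simp)) _ h1
      · exact ih (fun a ha => hds a (by simp [ha])) _ h2 r hr
    · cases hrs

theorem LrList_surj {S T : Set Rig} (h : ∀ r ∈ T, ∃ a ∈ S, Lr a = some r) (rs : List Rig) :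
    (∀ r ∈ rs, r ∈ T) → ∃ ds : List Rig, (∀ a ∈ ds, a ∈ S) ∧ LrList ds = some rs := by
  induction rs with
  | nil => exact fun _ => ⟨[], by simp, by simp [LrList]⟩
  | cons r rs ih =>
    intro hrs
    obtain ⟨a, ha, hr⟩ := h r (hrs r (by simp))
    obtain ⟨ds, hds, hr'⟩ := ih (fun x hx => hrs x (by simp [hx]))
    refine ⟨a :: ds, ?_, by simp only [LrList, hr, hr']⟩
    intro x hx
    rcases List.mem_cons.1 hx with rfl | hx
    · exact ha
    · exact hds x hx

theorem Lr_mem (M : Lam) : ∀ a ∈ Texp M, ∀ r, Lr a = some r → r ∈ Texp (Lam.L M) := by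
  induction M with
  | var n =>
    intro a ha r hr
    simp only [Texp, Set.mem_singleton_iff] at ha
    subst ha
    simp only [Lr, Option.some.injEq] at hr
    subst hr
    simp [Lam.L, Texp]
  | lam M ih =>
    rintro a ⟨a, ha, rfl⟩ r hr
    simp only [Lr, Option.map_eq_some_iff] at hr
    obtain ⟨r, hr, rfl⟩ := hr
    simp only [Lam.L]
    exact ⟨r, ih _ ha _ hr, rfl⟩
  | app P Q ihP ihQ =>
    rintro a ⟨c, hc, ds, hds, rfl⟩ r hr
    cases P with
    | var n =>
      simp only [Texp, Set.mem_singleton_iff] at hc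
      subst hc
      simp only [Lr, Option.map_eq_some_iff] at hr
      obtain ⟨rs, hr, rfl⟩ := hr
      simp only [Lam.L]
      exact ⟨Rig.var n, by simp [Texp], rs, LrList_mem ihQ ds hds _ hr, rfl⟩
    | lam P =>
      obtain ⟨a, ha, rfl⟩ := hc
      simp only [Lr] at hr
      simp only [Lam.L]
      exact rsubst_mem _ _ _ _ ha _ hds _ hr
    | app P₁ P₂ =>
      have hn := neutral_eq _ _ hc
      have hc0 := hc
      obtain ⟨c₁, hc₁, c₂, hc₂, rfl⟩ := hc
      rw [Lr] at hr
      rw [Lam.L]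
      rw [hn] at hr
      split at hr
      · rename_i hh
        rw [if_pos hh]
        split at hr
        · rename_i c' ds' h1 h2
          obtain rfl := Option.some.inj hr
          exact ⟨c', ihP _ hc0 _ h1, ds', LrList_mem ihQ ds hds _ h2, rfl⟩
        · cases hr
      · rename_i hh
        rw [if_neg hh]
        simp only [Option.map_eq_some_iff] at hr
        obtain ⟨c', h1, rfl⟩ := hr
        exact ⟨c', ihP _ hc0 _ h1, ds, hds, rfl⟩

theorem Lr_surj (M : Lam) : ∀ r ∈ Texp (Lam.L M), ∃ a ∈ Texp M, Lr a = some r := by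
  induction M with
  | var n =>
    intro r hr
    simp only [Lam.L, Texp, Set.mem_singleton_iff] at hr
    subst hr
    exact ⟨Rig.var n, by simp [Texp], by simp [Lr]⟩
  | lam M ih =>
    intro r hr
    simp only [Lam.L] at hr
    obtain ⟨r, hr, rfl⟩ := hr
    obtain ⟨a, ha, h⟩ := ih r hr
    exact ⟨Rig.lam a, ⟨a, ha, rfl⟩, by simp [Lr, h]⟩
  | app P Q ihP ihQ =>
    intro r hr
    cases P with
    | var n =>
      simp only [Lam.L] at hr
      obtain ⟨c, hc, ds, hds, rfl⟩ := hr
      simp only [Texp, Set.mem_singleton_iff] at hc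
      subst hc
      obtain ⟨es, hes, h⟩ := LrList_surj ihQ ds hds
      exact ⟨Rig.app (Rig.var n) es, ⟨Rig.var n, by simp [Texp], es, hes, rfl⟩, by simp [Lr, h]⟩
    | lam P =>
      simp only [Lam.L] at hr
      obtain ⟨a, ha, bs, hbs, _, h⟩ := rsubst_surj _ _ _ _ hr
      exact ⟨Rig.app (Rig.lam a) bs, ⟨Rig.lam a, ⟨a, ha, rfl⟩, bs, hbs, rfl⟩, by simp [Lr, h]⟩
    | app P₁ P₂ =>
      rw [Lam.L] at hr
      split at hr
      · rename_i hh
        obtain ⟨c, hc, ds, hds, rfl⟩ := hr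
        obtain ⟨es, hes, h⟩ := LrList_surj ihQ ds hds
        obtain ⟨a, ha, h'⟩ := ihP c hc
        have hn := neutral_eq _ _ ha
        have ha0 := ha
        obtain ⟨c₁, hc₁, c₂, hc₂, rfl⟩ := ha
        refine ⟨_, ⟨_, ha0, es, hes, rfl⟩, ?_⟩
        rw [Lr, hn, if_pos hh, h', h]
      · rename_i hh
        obtain ⟨c, hc, ds, hds, rfl⟩ := hr
        obtain ⟨a, ha, h'⟩ := ihP c hc
        have hn := neutral_eq _ _ ha
        have ha0 := ha
        obtain ⟨c₁, hc₁, c₂, hc₂, rfl⟩ := ha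
        refine ⟨_, ⟨_, ha0, ds, hds, rfl⟩, ?_⟩
        rw [Lr, hn, if_neg hh, h']
        rfl

end LPC

/-- `L_r(T_r(M)) = T_r(L(M))`, where
`L_r(T_r(M)) = { L_r(a) | a ∈ T_r(M), L_r(a) ≠ 0 }`: the left-parallel reduction
commutes with rigid expansion. -/
theorem left_parallel_commutes_with_Texp (M : Lam) :
    {b : Rig | ∃ a ∈ Texp M, Rig.Lr a = some b} = Texp (Lam.L M) := by
  ext r
  constructor
  · rintro ⟨a, ha, h⟩
    exact LPC.Lr_mem M a ha r h
  · intro hr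
    exact LPC.Lr_surj M r hr
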